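/- arXiv:math/0611836 — 2 statements merged into one kernel-verified Lean document; each statement's English description precedes it below -/
import Mathlib

section
/- Let α = log(5/3)/log 4. If f : V* → ℝ has finite energy 𝓔(f,f) = sup_{n≥0} 𝓔_n(f,f) < ∞, then |f(x) − f(y)| ≤ 6 √(𝓔(f,f)) · ‖x−y‖^α for all x, y ∈ V*, and f extends uniquely to a continuous (indeed α-Hölder continuous) function on V. -/
open Set MeasureTheory Filter Topology
open scoped Classical ENNReal NNReal BoundedContinuousFunction

noncomputable section

/-- The plane, with the Euclidean norm. -/
abbrev Pt : Type := EuclideanSpace ℝ (Fin 2)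

/-- The three vertexes of the initial equilateral triangle. -/
def ptA : Fin 3 → Pt
  | 0 => (WithLp.equiv 2 (Fin 2 → ℝ)).symm ![0, 0]
  | 1 => (WithLp.equiv 2 (Fin 2 → ℝ)).symm ![1, 0]
  | 2 => (WithLp.equiv 2 (Fin 2 → ℝ)).symm ![1 / 2, Real.sqrt 3 / 2]

/-- The contraction `fᵢ(z) = (z + aᵢ)/2`. -/
def sgMap (i : Fin 3) (z : Pt) : Pt := (2 : ℝ)⁻¹ • (z + ptA i)

/-- The vertex sets `V_n`. -/
def Vn : ℕ → Finset Pt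
  | 0 => {ptA 0, ptA 1, ptA 2}
  | n + 1 => (Vn n).image (sgMap 0) ∪ (Vn n).image (sgMap 1) ∪ (Vn n).image (sgMap 2)

/-- `V* = ⋃ₙ Vₙ`. -/
def Vstar : Set Pt := ⋃ n, (Vn n : Set Pt)

/-- The Sierpinski gasket `V`, the closure of `V*`. -/
def sg : Set Pt := closure Vstar

lemma Vstar_subset_sg {x : Pt} (hx : x ∈ Vstar) : x ∈ sg :=
  subset_closure hx

lemma Vn_subset_sg {n : ℕ} {x : Pt} (hx : x ∈ Vn n) : x ∈ sg :=
  subset_closure (Set.mem_iUnion.mpr ⟨n, hx⟩)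

/-- `{x,y}` is an edge of the graph `Γₙ`. -/
def isEdge (n : ℕ) (x y : Pt) : Prop := ‖x - y‖ = (2 : ℝ) ^ (-(n : ℤ))

/-- The discrete energy form `𝓔ₙ(u,v) = (5/3)ⁿ Σ_{{x,y}∈Eₙ} (u(y)-u(x))(v(y)-v(x))`;
the sum over unordered pairs is written as half the sum over ordered pairs. -/
def energyBi (n : ℕ) (u v : Pt → ℝ) : ℝ :=
  (5 / 3 : ℝ) ^ n * (1 / 2) *
    ∑ x ∈ Vn n, ∑ y ∈ Vn n, if isEdge n x y then (u y - u x) * (v y - v x) else 0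

/-- The discrete energy `𝓔ₙ(u,u)`. -/
def energy (n : ℕ) (u : Pt → ℝ) : ℝ := energyBi n u u

/-- The discrete Laplacian `Δₙ g(x) = 5ⁿ Σ_{y:{x,y}∈Eₙ} (g(y)-g(x))`. -/
def discLap (n : ℕ) (g : Pt → ℝ) (x : Pt) : ℝ :=
  (5 : ℝ) ^ n * ∑ y ∈ Vn n, if isEdge n x y then g y - g x else 0

/-- A function on `V*` has finite energy if `supₙ 𝓔ₙ(u,u) < ∞`. -/
def FiniteEnergy (u : Pt → ℝ) : Prop := BddAbove (Set.range fun n => energy n u)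

/-- The empirical vertex measure `μₙ`, giving mass `3⁻ⁿ` to each point of `Vₙ`. -/
def empMeas (n : ℕ) : Measure Pt :=
  ((3 : ℝ≥0∞) ^ n)⁻¹ • ∑ x ∈ Vn n, Measure.dirac x

/-- Extension by zero of a continuous function on the gasket. -/
def sgExt (f : C(sg, ℝ)) (x : Pt) : ℝ := if hx : x ∈ sg then f ⟨x, hx⟩ else 0

/-- `h(k)! = h(1)⋯h(k)`, with `h(0)! = 1`. -/
def hfact (h : ℕ → ℝ) (k : ℕ) : ℝ := ∏ i ∈ Finset.range k, h (i + 1)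

/-- The partition function `Z(φ) = Σₖ φᵏ/h(k)!`. -/
def Zfun (h : ℕ → ℝ) (φ : ℝ) : ℝ := ∑' k, φ ^ k / hfact h k

/-- The one-site marginal `p_φ(k) = Z(φ)⁻¹ φᵏ/h(k)!`. -/
def pmarg (h : ℕ → ℝ) (φ : ℝ) (k : ℕ) : ℝ := (Zfun h φ)⁻¹ * φ ^ k / hfact h k

/-- The mean of the one-site marginal `p_φ`. -/
def meanFun (h : ℕ → ℝ) (φ : ℝ) : ℝ := ∑' k : ℕ, (k : ℝ) * pmarg h φ k

/-- The zero-range generator on `Ωₙ = ℕ^{Vₙ}`, summing over ordered pairs `(x,y)`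
with `{x,y} ∈ Eₙ`. -/
def zrGen (n : ℕ) (h : ℕ → ℝ) (F : (↥(Vn n) → ℕ) → ℝ) (η : ↥(Vn n) → ℕ) : ℝ :=
  ∑ x : ↥(Vn n), ∑ y : ↥(Vn n),
    if isEdge n x.1 y.1 then
      h (η x) * (F (Function.update (Function.update η x (η x - 1)) y (η y + 1)) - F η)
    else 0

/-!
The graph `Γₙ₊₁` contains three copies of `Γₙ` with disjoint edge sets, so
`(5/3) ∑ᵢ 𝓔ₙ(u ∘ fᵢ) ≤ 𝓔ₙ₊₁(u)`, and everything follows by induction on `n` from this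
inequality. The harmonic extension from `V₀` to `V₁` gives `𝓔₀ ≤ 𝓔₁`, hence `𝓔₀ ≤ 𝓔ₙ`, and so
`(u(aᵢ) - u(aⱼ))² ≤ (2/3) 𝓔ₙ(u)`. A path from `x ∈ fᵢ(Vₙ)` to `aₖ` through the common corner
`fᵢ(aₖ) = fₖ(aᵢ)` then has resistance at most `(3/5)(1 + 2/3) = 1`, that is,
`(u(x) - u(aₖ))² ≤ 𝓔ₙ(u)` on all of `Vₙ`.

Passing to a cell halves distances and multiplies the energy by at most `3/5`. The inequality
`(u(x) - u(y))² ≤ K 𝓔ₙ(u) ‖x - y‖^β` is invariant under this exactly for `2^β = 5/3`, so only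
points of different cells need an argument, and these are compared through the common corner of
the two cells. There `‖x - m‖ + ‖m - y‖` is controlled by `‖x - y‖`, because cells meet at a
positive angle, and this yields `K = 2 (5/3)³ ≤ 36`.
-/

section Holder

variable {X Y : Type*} {C r : ℝ≥0} {f : X → Y} {s : Set X}

lemma holderOnWith_of_dist_le [PseudoMetricSpace X] [PseudoMetricSpace Y]
    (hf : ∀ x ∈ s, ∀ y ∈ s, dist (f x) (f y) ≤ C * dist x y ^ (r : ℝ)) :
    HolderOnWith C r f s := by
  intro x hx y hy
  rw [edist_nndist, edist_nndist, ← ENNReal.coe_rpow_of_nonneg _ r.coe_nonneg]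
  exact_mod_cast hf x hx y hy

lemma holderWith_dense_extend [PseudoEMetricSpace X] [EMetricSpace Y] [CompleteSpace Y]
    (hs : Dense s) {f : s → Y} (hf : HolderWith C r f) (hr : 0 < r) :
    HolderWith C r (hs.extend f) := by
  have hfu : UniformContinuous f := hf.uniformContinuous hr
  have hgc : Continuous (hs.extend f) := (hs.uniformContinuous_extend hfu).continuous
  refine hs.denseRange_val.induction_on₂ ?_ fun x y => ?_
  · exact isClosed_le (by fun_prop) (ENNReal.continuous_const_mul ENNReal.coe_ne_top |>.comp
      (ENNReal.continuous_rpow_const.comp continuous_edist))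
  · rw [hs.extend_of_ind hfu, hs.extend_of_ind hfu]
    exact hf x y

lemma dense_preimage_val_closure [TopologicalSpace X] (s : Set X) :
    Dense ((↑) ⁻¹' s : Set (closure s)) := by
  rw [Subtype.dense_iff, Subtype.image_preimage_coe, inter_eq_right.2 subset_closure]

lemma exists_holderWith_extend_closure [PseudoEMetricSpace X] [EMetricSpace Y] [CompleteSpace Y]
    (hf : HolderOnWith C r f s) (hr : 0 < r) :
    ∃ g : C(closure s, Y), HolderWith C r g ∧ ∀ x (hx : x ∈ s), g ⟨x, subset_closure hx⟩ = f x := by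
  have hs := dense_preimage_val_closure s
  have hfs : HolderWith C r fun p : ((↑) ⁻¹' s : Set (closure s)) => f p :=
    fun p q => hf p p.2 q q.2
  have hext := holderWith_dense_extend hs hfs hr
  exact ⟨⟨_, hext.continuous hr⟩, hext, fun x hx =>
    hs.extend_of_ind (hfs.uniformContinuous hr) ⟨⟨x, subset_closure hx⟩, hx⟩⟩

lemma continuousMap_closure_ext [TopologicalSpace X] [TopologicalSpace Y] [T2Space Y]
    {g g' : C(closure s, Y)}
    (h : ∀ x (hx : x ∈ s), g ⟨x, subset_closure hx⟩ = g' ⟨x, subset_closure hx⟩) : g = g' :=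
  DFunLike.coe_injective <| g.continuous.ext_on (dense_preimage_val_closure s) g'.continuous
    fun p hp => h p hp

end Holder

section Geometry

variable {n : ℕ} {i j : Fin 3} {x y : Pt}

lemma sgMap_ptA_comm (i j : Fin 3) : sgMap i (ptA j) = sgMap j (ptA i) := by
  rw [sgMap, sgMap, add_comm]

@[simp]
lemma sgMap_ptA_self (i : Fin 3) : sgMap i (ptA i) = ptA i := by
  rw [sgMap, ← two_smul ℝ (ptA i), inv_smul_smul₀ two_ne_zero]

lemma norm_sgMap_sub (i : Fin 3) (x y : Pt) : ‖sgMap i x - sgMap i y‖ = ‖x - y‖ / 2 := by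
  rw [sgMap, sgMap, ← smul_sub, add_sub_add_right_eq_sub, norm_smul, norm_inv, Real.norm_two,
    inv_mul_eq_div]

lemma sgMap_injective (i : Fin 3) : Function.Injective (sgMap i) := fun x y h => by
  simpa [sub_eq_zero, h] using (norm_sgMap_sub i x y).symm

lemma norm_ptA_sub (h : i ≠ j) : ‖ptA i - ptA j‖ = 1 := by
  rw [EuclideanSpace.norm_eq, Real.sqrt_eq_one]
  fin_cases i <;> fin_cases j <;> simp [ptA, div_pow] at h ⊢ <;> norm_num

lemma ptA_injective : Function.Injective ptA := fun i j h => by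
  by_contra hij
  simpa [h] using norm_ptA_sub hij

lemma Vn_zero : Vn 0 = Finset.univ.image ptA := by
  ext x
  simp [Vn, Fin.exists_fin_succ, eq_comm]

lemma ptA_mem_Vn_zero (i : Fin 3) : ptA i ∈ Vn 0 :=
  Vn_zero ▸ Finset.mem_image_of_mem ptA (Finset.mem_univ i)

lemma mem_Vn_succ : x ∈ Vn (n + 1) ↔ ∃ i, ∃ y ∈ Vn n, sgMap i y = x := by
  simp [Vn, Fin.exists_fin_succ]

lemma sgMap_mem_Vn_succ (i : Fin 3) (hx : x ∈ Vn n) : sgMap i x ∈ Vn (n + 1) :=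
  mem_Vn_succ.2 ⟨i, x, hx, rfl⟩

@[elab_as_elim]
lemma Vn_induction {motive : ∀ n x, x ∈ Vn n → Prop}
    (corner : ∀ i, motive 0 (ptA i) (ptA_mem_Vn_zero i))
    (map : ∀ n i x (hx : x ∈ Vn n), motive n x hx →
      motive (n + 1) (sgMap i x) (sgMap_mem_Vn_succ i hx))
    {n : ℕ} {x : Pt} (hx : x ∈ Vn n) : motive n x hx := by
  induction n generalizing x with
  | zero =>
    obtain ⟨i, -, rfl⟩ := Finset.mem_image.1 (Vn_zero ▸ hx)
    exact corner i
  | succ n ih =>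
    obtain ⟨i, y, hy, rfl⟩ := mem_Vn_succ.1 hx
    exact map n i y hy (ih hy)

lemma Vn_monotone : Monotone Vn := by
  refine monotone_nat_of_le_succ fun n x hx => ?_
  induction hx using Vn_induction with
  | corner i => exact sgMap_ptA_self i ▸ sgMap_mem_Vn_succ i (ptA_mem_Vn_zero i)
  | map n i x _ ih => exact sgMap_mem_Vn_succ i ih

/-- The barycentric coordinates of a point of the plane with respect to the triangle
`a₀ a₁ a₂`. They are affine, hence easy to follow along `sgMap`, and separate the cells. -/
def bary (z : Pt) : Fin 3 → ℝ :=
  ![1 - z 0 - z 1 / √3, z 0 - z 1 / √3, 2 * z 1 / √3]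

lemma bary_ptA (i : Fin 3) : bary (ptA i) = Pi.single i 1 := by
  ext j
  fin_cases i <;> fin_cases j <;> simp [bary, ptA] <;> field_simp <;> norm_num

lemma bary_sgMap (i : Fin 3) (z : Pt) :
    bary (sgMap i z) = (2 : ℝ)⁻¹ • (bary z + bary (ptA i)) := by
  ext j
  fin_cases j <;> simp [bary, sgMap] <;> ring

lemma sum_bary (z : Pt) : ∑ i, bary z i = 1 := by
  rw [Fin.sum_univ_three]
  change (1 - z 0 - z 1 / √3) + (z 0 - z 1 / √3) + 2 * z 1 / √3 = 1
  ring

lemma sum_bary_smul_ptA (z : Pt) : ∑ i, bary z i • ptA i = z := by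
  ext j
  fin_cases j <;> simp [bary, ptA, Fin.sum_univ_three] <;> field_simp
  ring

lemma abs_bary_sub_le (i : Fin 3) (x y : Pt) : |bary x i - bary y i| ≤ 2 * ‖x - y‖ := by
  have h₀ : |x 0 - y 0| ≤ ‖x - y‖ := PiLp.norm_apply_le (x - y) 0
  have h₁ : |(x 1 - y 1) / √3| ≤ ‖x - y‖ := by
    rw [abs_div, abs_of_nonneg (Real.sqrt_nonneg 3)]
    exact (div_le_self (abs_nonneg _) (Real.one_le_sqrt.2 (by norm_num))).trans
      (PiLp.norm_apply_le (x - y) 1)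
  have hsub : bary x - bary y =
      ![-(x 0 - y 0) - (x 1 - y 1) / √3, (x 0 - y 0) - (x 1 - y 1) / √3,
        2 * ((x 1 - y 1) / √3)] := by
    ext k
    fin_cases k <;> simp [bary] <;> ring
  rw [abs_le] at h₀ h₁
  rw [← Pi.sub_apply, hsub, abs_le]
  fin_cases i <;> constructor <;> simp <;> linarith

lemma bary_nonneg (hx : x ∈ Vn n) : 0 ≤ bary x := by
  have corner_nonneg (i : Fin 3) : 0 ≤ bary (ptA i) := by
    rw [bary_ptA]
    exact Pi.single_nonneg.2 zero_le_one
  induction hx using Vn_induction with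
  | corner i => exact corner_nonneg i
  | map n i x _ ih =>
    rw [bary_sgMap]
    exact smul_nonneg (by norm_num) (add_nonneg ih (corner_nonneg i))

lemma norm_sub_ptA_le (hx : 0 ≤ bary x) (j : Fin 3) : ‖x - ptA j‖ ≤ 1 - bary x j := by
  have hsub : x - ptA j = ∑ i, bary x i • (ptA i - ptA j) := by
    simp only [smul_sub, Finset.sum_sub_distrib, sum_bary_smul_ptA, ← Finset.sum_smul, sum_bary,
      one_smul]
  calc ‖x - ptA j‖ ≤ ∑ i, bary x i * ‖ptA i - ptA j‖ := by
        rw [hsub]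
        refine (norm_sum_le _ _).trans_eq (Finset.sum_congr rfl fun i _ => ?_)
        rw [norm_smul, Real.norm_of_nonneg (hx i)]
    _ = ∑ i ∈ Finset.univ.erase j, bary x i := by
        rw [← Finset.add_sum_erase _ _ (Finset.mem_univ j), sub_self, norm_zero, mul_zero, zero_add]
        refine Finset.sum_congr rfl fun i hi => ?_
        rw [norm_ptA_sub (Finset.ne_of_mem_erase hi), mul_one]
    _ = 1 - bary x j := by
        rw [← sum_bary x, ← Finset.add_sum_erase _ _ (Finset.mem_univ j), add_sub_cancel_left]

/-- Quantifies that the cells `i` and `j` meet only at `sgMap i (ptA j)`, and at a positive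
angle. -/
lemma norm_sub_ptA_le_of_sgMap (hij : i ≠ j) (hx : 0 ≤ bary x) (hy : 0 ≤ bary y) :
    ‖x - ptA j‖ ≤ 4 * ‖sgMap i x - sgMap j y‖ := by
  have hxj : bary (sgMap i x) j = bary x j / 2 := by
    simp [bary_sgMap, bary_ptA, hij.symm, inv_mul_eq_div]
  have hyj : bary (sgMap j y) j = (bary y j + 1) / 2 := by
    simp [bary_sgMap, bary_ptA, inv_mul_eq_div]
  have hlip := neg_le_of_abs_le (abs_bary_sub_le j (sgMap i x) (sgMap j y))
  have hyj0 : 0 ≤ bary y j := hy j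
  linarith [norm_sub_ptA_le hx j]

lemma one_le_four_mul_norm_sgMap_sub_ptA (hij : i ≠ j) (hx : 0 ≤ bary x) :
    1 ≤ 4 * ‖sgMap i x - ptA j‖ := by
  have hxi : bary (sgMap i x) i = (bary x i + 1) / 2 := by
    simp [bary_sgMap, bary_ptA, inv_mul_eq_div]
  have hji : bary (ptA j) i = 0 := by simp [bary_ptA, hij]
  have hlip := le_of_abs_le (abs_bary_sub_le i (sgMap i x) (ptA j))
  have hxi0 : 0 ≤ bary x i := hx i
  linarith

end Geometry

section Energy

/-- The edges of the graph `Γₙ`, each counted with both orientations, so that the energy is a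
single sum over them. -/
def edges (n : ℕ) : Finset (Pt × Pt) := (Vn n ×ˢ Vn n).filter fun p => isEdge n p.1 p.2

lemma energy_eq_sum_edges (n : ℕ) (u : Pt → ℝ) :
    energy n u = (5 / 3) ^ n * (1 / 2) * ∑ p ∈ edges n, (u p.2 - u p.1) ^ 2 := by
  simp only [energy, energyBi, edges, Finset.sum_filter, Finset.sum_product, sq]

lemma energy_nonneg (n : ℕ) (u : Pt → ℝ) : 0 ≤ energy n u := by
  rw [energy_eq_sum_edges]
  positivity

lemma mem_edges {n : ℕ} {x y : Pt} :
    (x, y) ∈ edges n ↔ x ∈ Vn n ∧ y ∈ Vn n ∧ ‖x - y‖ = 2 ^ (-(n : ℤ)) := by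
  simp [edges, isEdge, and_assoc]

lemma sgMap_mem_edges {n : ℕ} {x y : Pt} (i : Fin 3) (h : (x, y) ∈ edges n) :
    (sgMap i x, sgMap i y) ∈ edges (n + 1) := by
  obtain ⟨hx, hy, hxy⟩ := mem_edges.1 h
  refine mem_edges.2 ⟨sgMap_mem_Vn_succ i hx, sgMap_mem_Vn_succ i hy, ?_⟩
  rw [norm_sgMap_sub, hxy, zpow_neg, zpow_neg, zpow_natCast, zpow_natCast, pow_succ, mul_inv,
    div_eq_mul_inv]

lemma sgMap_edge_injOn (n : ℕ) :
    Set.InjOn (fun q : Fin 3 × (Pt × Pt) => (sgMap q.1 q.2.1, sgMap q.1 q.2.2))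
      (Finset.univ ×ˢ edges n : Finset (Fin 3 × (Pt × Pt))) := by
  rintro ⟨i, p₁, p₂⟩ hp ⟨j, q₁, q₂⟩ hq h
  obtain ⟨hp₁, hp₂, hlen⟩ := mem_edges.1 (Finset.mem_product.1 hp).2
  obtain ⟨hq₁, hq₂, -⟩ := mem_edges.1 (Finset.mem_product.1 hq).2
  simp only [Prod.mk.injEq] at h
  obtain ⟨h₁, h₂⟩ := h
  obtain rfl | hij := eq_or_ne i j
  · rw [sgMap_injective i h₁, sgMap_injective i h₂]
  · have eq_corner {x y : Pt} (hx : x ∈ Vn n) (hy : y ∈ Vn n) (hxy : sgMap i x = sgMap j y) :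
        x = ptA j := by
      have := norm_sub_ptA_le_of_sgMap hij (bary_nonneg hx) (bary_nonneg hy)
      rwa [hxy, sub_self, norm_zero, mul_zero, norm_le_zero_iff, sub_eq_zero] at this
    rw [eq_corner hp₁ hq₁ h₁, eq_corner hp₂ hq₂ h₂, sub_self, norm_zero] at hlen
    exact absurd hlen (by positivity)

lemma sum_energy_comp_sgMap_le (n : ℕ) (u : Pt → ℝ) :
    5 / 3 * ∑ i, energy n (u ∘ sgMap i) ≤ energy (n + 1) u := by
  have hsub : (Finset.univ ×ˢ edges n).image
      (fun q : Fin 3 × (Pt × Pt) => (sgMap q.1 q.2.1, sgMap q.1 q.2.2)) ⊆ edges (n + 1) :=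
    Finset.image_subset_iff.2 fun q hq => sgMap_mem_edges q.1 (Finset.mem_product.1 hq).2
  have hsum : ∑ i, ∑ p ∈ edges n, (u (sgMap i p.2) - u (sgMap i p.1)) ^ 2 ≤
      ∑ p ∈ edges (n + 1), (u p.2 - u p.1) ^ 2 := by
    rw [← Finset.sum_product', ← Finset.sum_image
      (f := fun p : Pt × Pt => (u p.2 - u p.1) ^ 2) (sgMap_edge_injOn n)]
    exact Finset.sum_le_sum_of_subset_of_nonneg hsub fun _ _ _ => sq_nonneg _
  calc 5 / 3 * ∑ i, energy n (u ∘ sgMap i)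
      = (5 / 3) ^ (n + 1) * (1 / 2) *
          ∑ i, ∑ p ∈ edges n, (u (sgMap i p.2) - u (sgMap i p.1)) ^ 2 := by
        simp only [energy_eq_sum_edges, Function.comp_apply, ← Finset.mul_sum]
        ring
    _ ≤ energy (n + 1) u := by
        rw [energy_eq_sum_edges]
        gcongr

lemma energy_comp_sgMap_le (n : ℕ) (u : Pt → ℝ) (i : Fin 3) :
    5 / 3 * energy n (u ∘ sgMap i) ≤ energy (n + 1) u := by
  have := Finset.single_le_sum (fun k _ => energy_nonneg n (u ∘ sgMap k)) (Finset.mem_univ i)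
  linarith [sum_energy_comp_sgMap_le n u]

lemma energy_comp_sgMap_add_le (n : ℕ) (u : Pt → ℝ) {i j : Fin 3} (hij : i ≠ j) :
    5 / 3 * (energy n (u ∘ sgMap i) + energy n (u ∘ sgMap j)) ≤ energy (n + 1) u := by
  have := Finset.add_le_sum (fun k _ => energy_nonneg n (u ∘ sgMap k)) (Finset.mem_univ i)
    (Finset.mem_univ j) hij
  linarith [sum_energy_comp_sgMap_le n u]

lemma energy_zero (u : Pt → ℝ) :
    energy 0 u = (u (ptA 0) - u (ptA 1)) ^ 2 + (u (ptA 1) - u (ptA 2)) ^ 2 +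
      (u (ptA 2) - u (ptA 0)) ^ 2 := by
  have hedge {i j : Fin 3} (hij : i ≠ j) : isEdge 0 (ptA i) (ptA j) := by
    simp [isEdge, norm_ptA_sub hij]
  simp only [energy, energyBi, pow_zero, one_mul, Vn_zero, Finset.sum_image ptA_injective.injOn,
    Fin.sum_univ_three, Fin.isValue, sub_self, mul_zero, ite_self, ne_eq, zero_ne_one,
    not_false_eq_true, hedge, ↓reduceIte, zero_add, Fin.reduceEq, one_ne_zero, add_zero]
  ring

lemma sq_sub_ptA_le_energy_zero (u : Pt → ℝ) (i j : Fin 3) :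
    (u (ptA i) - u (ptA j)) ^ 2 ≤ 2 / 3 * energy 0 u := by
  have triangle (a b c : ℝ) : (a - b) ^ 2 ≤ 2 / 3 * ((a - b) ^ 2 + (b - c) ^ 2 + (c - a) ^ 2) := by
    nlinarith [sq_nonneg (a + b - 2 * c)]
  have h₀₁ := triangle (u (ptA 0)) (u (ptA 1)) (u (ptA 2))
  have h₁₂ := triangle (u (ptA 1)) (u (ptA 2)) (u (ptA 0))
  have h₂₀ := triangle (u (ptA 2)) (u (ptA 0)) (u (ptA 1))
  have hE := energy_nonneg 0 u
  rw [energy_zero] at hE ⊢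
  fin_cases i <;> fin_cases j <;> simp <;> linarith

lemma triangle_energy_le (a b c p q r : ℝ) :
    (a - b) ^ 2 + (b - c) ^ 2 + (c - a) ^ 2 ≤
      5 / 3 * (((a - r) ^ 2 + (r - q) ^ 2 + (q - a) ^ 2) +
        ((r - b) ^ 2 + (b - p) ^ 2 + (p - r) ^ 2) +
        ((q - p) ^ 2 + (p - c) ^ 2 + (c - q) ^ 2)) := by
  -- The values at the midpoints of the harmonic extension of `a, b, c`.
  let p₀ := (a + 2 * b + 2 * c) / 5
  let q₀ := (2 * a + b + 2 * c) / 5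
  let r₀ := (2 * a + 2 * b + c) / 5
  have completed_square :
      5 / 3 * (((a - r) ^ 2 + (r - q) ^ 2 + (q - a) ^ 2) +
          ((r - b) ^ 2 + (b - p) ^ 2 + (p - r) ^ 2) +
          ((q - p) ^ 2 + (p - c) ^ 2 + (c - q) ^ 2)) =
        ((a - b) ^ 2 + (b - c) ^ 2 + (c - a) ^ 2) +
        5 / 3 * (2 * (p - p₀) ^ 2 + 2 * (q - q₀) ^ 2 + 2 * (r - r₀) ^ 2 +
          (p - p₀ - (q - q₀)) ^ 2 + (q - q₀ - (r - r₀)) ^ 2 + (r - r₀ - (p - p₀)) ^ 2) := by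
    simp only [p₀, q₀, r₀]
    ring
  rw [completed_square]
  exact le_add_of_nonneg_right (by positivity)

lemma energy_zero_le_sum_comp_sgMap (u : Pt → ℝ) :
    energy 0 u ≤ 5 / 3 * ∑ i, energy 0 (u ∘ sgMap i) := by
  simp only [energy_zero, Fin.sum_univ_three, Function.comp_apply, sgMap_ptA_self,
    sgMap_ptA_comm 1 0, sgMap_ptA_comm 2 0, sgMap_ptA_comm 2 1]
  exact triangle_energy_le _ _ _ _ _ _

lemma energy_zero_le_energy (n : ℕ) (u : Pt → ℝ) : energy 0 u ≤ energy n u := by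
  induction n generalizing u with
  | zero => rfl
  | succ n ih =>
    calc energy 0 u ≤ 5 / 3 * ∑ i, energy 0 (u ∘ sgMap i) := energy_zero_le_sum_comp_sgMap u
      _ ≤ 5 / 3 * ∑ i, energy n (u ∘ sgMap i) := by gcongr with i; exact ih _
      _ ≤ energy (n + 1) u := sum_energy_comp_sgMap_le n u

end Energy

section Resistance

/-- The resistance exponent of the gasket: the effective resistance between two points at
distance `d` is comparable to `d ^ resistanceExp`. -/
def resistanceExp : ℝ := Real.logb 2 (5 / 3)

lemma two_rpow_resistanceExp : (2 : ℝ) ^ resistanceExp = 5 / 3 :=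
  Real.rpow_logb two_pos (by norm_num) (by norm_num)

lemma resistanceExp_pos : 0 < resistanceExp := Real.logb_pos one_lt_two (by norm_num)

lemma two_mul_rpow_resistanceExp {t : ℝ} (ht : 0 ≤ t) :
    (2 * t) ^ resistanceExp = 5 / 3 * t ^ resistanceExp := by
  rw [Real.mul_rpow zero_le_two ht, two_rpow_resistanceExp]

lemma four_mul_rpow_resistanceExp {t : ℝ} (ht : 0 ≤ t) :
    (4 * t) ^ resistanceExp = (5 / 3) ^ 2 * t ^ resistanceExp := by
  rw [show 4 * t = 2 * (2 * t) by ring, two_mul_rpow_resistanceExp (by positivity),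
    two_mul_rpow_resistanceExp ht]
  ring

lemma energy_comp_sgMap_mul_rpow_le (n : ℕ) (u : Pt → ℝ) (i : Fin 3) (x y : Pt) :
    energy n (u ∘ sgMap i) * ‖x - y‖ ^ resistanceExp ≤
      energy (n + 1) u * ‖sgMap i x - sgMap i y‖ ^ resistanceExp := by
  rw [show ‖x - y‖ = 2 * ‖sgMap i x - sgMap i y‖ by rw [norm_sgMap_sub]; ring,
    two_mul_rpow_resistanceExp (norm_nonneg _), ← mul_assoc, mul_comm _ (5 / 3 : ℝ)]
  gcongr
  exact energy_comp_sgMap_le n u i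

lemma sq_sub_ptA_le_energy {n : ℕ} {x : Pt} (hx : x ∈ Vn n) (u : Pt → ℝ) (k : Fin 3) :
    (u x - u (ptA k)) ^ 2 ≤ energy n u := by
  induction hx using Vn_induction generalizing u k with
  | corner i => linarith [sq_sub_ptA_le_energy_zero u i k, energy_nonneg 0 u]
  | map n i x _ ih =>
    obtain rfl | hik := eq_or_ne i k
    · have hcell := ih (u ∘ sgMap i) i
      rw [Function.comp_apply, Function.comp_apply, sgMap_ptA_self] at hcell
      linarith [energy_comp_sgMap_le n u i, energy_nonneg n (u ∘ sgMap i)]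
    · set m := sgMap i (ptA k) with hm
      have hxm : (u (sgMap i x) - u m) ^ 2 ≤ energy n (u ∘ sgMap i) := ih (u ∘ sgMap i) k
      have hmk : (u m - u (ptA k)) ^ 2 ≤ 2 / 3 * energy n (u ∘ sgMap k) := by
        have hcorner := sq_sub_ptA_le_energy_zero (u ∘ sgMap k) i k
        rw [Function.comp_apply, Function.comp_apply, sgMap_ptA_self, sgMap_ptA_comm,
          ← hm] at hcorner
        linarith [energy_zero_le_energy n (u ∘ sgMap k)]
      -- Cauchy-Schwarz with weights `1` and `2 / 3`, the constants in `hxm` and `hmk`. Their sum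
      -- `5 / 3` is the scaling factor of the energy, so that the bound reproduces itself.
      have add_sq_le_weighted (a b : ℝ) : (a + b) ^ 2 ≤ 5 / 3 * (a ^ 2 + 3 / 2 * b ^ 2) := by
        nlinarith [sq_nonneg (2 * a - 3 * b)]
      have hxk := add_sq_le_weighted (u (sgMap i x) - u m) (u m - u (ptA k))
      rw [sub_add_sub_cancel] at hxk
      linarith [energy_comp_sgMap_add_le n u hik]

lemma sq_sub_ptA_le_energy_mul_rpow_of_one_le {n : ℕ} {x : Pt} (hx : x ∈ Vn n) (u : Pt → ℝ)
    {k : Fin 3} (hd : 1 ≤ 4 * ‖x - ptA k‖) :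
    (u x - u (ptA k)) ^ 2 ≤ (5 / 3) ^ 2 * energy n u * ‖x - ptA k‖ ^ resistanceExp := by
  have hpow : 1 ≤ (5 / 3) ^ 2 * ‖x - ptA k‖ ^ resistanceExp := by
    rw [← four_mul_rpow_resistanceExp (norm_nonneg _)]
    exact Real.one_le_rpow hd resistanceExp_pos.le
  calc (u x - u (ptA k)) ^ 2 ≤ energy n u := sq_sub_ptA_le_energy hx u k
    _ ≤ energy n u * ((5 / 3) ^ 2 * ‖x - ptA k‖ ^ resistanceExp) :=
      le_mul_of_one_le_right (energy_nonneg n u) hpow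
    _ = (5 / 3) ^ 2 * energy n u * ‖x - ptA k‖ ^ resistanceExp := by ring

lemma sq_sub_ptA_le_energy_mul_rpow {n : ℕ} {x : Pt} (hx : x ∈ Vn n) (u : Pt → ℝ) (k : Fin 3) :
    (u x - u (ptA k)) ^ 2 ≤ (5 / 3) ^ 2 * energy n u * ‖x - ptA k‖ ^ resistanceExp := by
  induction hx using Vn_induction generalizing u with
  | corner i =>
    obtain rfl | hik := eq_or_ne i k
    · simp [Real.zero_rpow resistanceExp_pos.ne']
    · exact sq_sub_ptA_le_energy_mul_rpow_of_one_le (ptA_mem_Vn_zero i) u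
        (by norm_num [norm_ptA_sub hik])
  | map n i x hx ih =>
    obtain rfl | hik := eq_or_ne i k
    · have hcell := ih (u ∘ sgMap i)
      have hscale := energy_comp_sgMap_mul_rpow_le n u i x (ptA i)
      simp only [Function.comp_apply, sgMap_ptA_self] at hcell hscale
      linarith
    · exact sq_sub_ptA_le_energy_mul_rpow_of_one_le (sgMap_mem_Vn_succ i hx) u
        (one_le_four_mul_norm_sgMap_sub_ptA hik (bary_nonneg hx))

lemma sq_sub_le_energy_mul_rpow_of_ne {n : ℕ} {x y : Pt} (hx : x ∈ Vn n) (hy : y ∈ Vn n)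
    (u : Pt → ℝ) {i j : Fin 3} (hij : i ≠ j) :
    (u (sgMap i x) - u (sgMap j y)) ^ 2 ≤
      2 * (5 / 3) ^ 3 * energy (n + 1) u * ‖sgMap i x - sgMap j y‖ ^ resistanceExp := by
  set d := ‖sgMap i x - sgMap j y‖ with hd
  have hd0 : 0 ≤ d := norm_nonneg _
  have to_corner {z : Pt} (hz : z ∈ Vn n) {k l : Fin 3} (h : ‖z - ptA l‖ ≤ 4 * d) :
      (u (sgMap k z) - u (sgMap k (ptA l))) ^ 2 ≤
        (5 / 3) ^ 4 * d ^ resistanceExp * energy n (u ∘ sgMap k) :=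
    calc (u (sgMap k z) - u (sgMap k (ptA l))) ^ 2
        ≤ (5 / 3) ^ 2 * energy n (u ∘ sgMap k) * ‖z - ptA l‖ ^ resistanceExp :=
          sq_sub_ptA_le_energy_mul_rpow hz (u ∘ sgMap k) l
      _ ≤ (5 / 3) ^ 2 * energy n (u ∘ sgMap k) * (4 * d) ^ resistanceExp := by
          have := energy_nonneg n (u ∘ sgMap k)
          have := resistanceExp_pos.le
          gcongr
      _ = (5 / 3) ^ 4 * d ^ resistanceExp * energy n (u ∘ sgMap k) := by
          rw [four_mul_rpow_resistanceExp hd0]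
          ring
  have hxm := to_corner (k := i) hx
    (norm_sub_ptA_le_of_sgMap hij (bary_nonneg hx) (bary_nonneg hy))
  have hym := to_corner (k := j) hy (by
    rw [hd, norm_sub_rev (sgMap i x)]
    exact norm_sub_ptA_le_of_sgMap hij.symm (bary_nonneg hy) (bary_nonneg hx))
  rw [sgMap_ptA_comm j i, sub_sq_comm] at hym
  set m := sgMap i (ptA j)
  calc (u (sgMap i x) - u (sgMap j y)) ^ 2
      = ((u (sgMap i x) - u m) + (u m - u (sgMap j y))) ^ 2 := by rw [sub_add_sub_cancel]
    _ ≤ 2 * ((u (sgMap i x) - u m) ^ 2 + (u m - u (sgMap j y)) ^ 2) := add_sq_le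
    _ ≤ 2 * (5 / 3) ^ 3 * d ^ resistanceExp *
          (5 / 3 * (energy n (u ∘ sgMap i) + energy n (u ∘ sgMap j))) := by linarith
    _ ≤ 2 * (5 / 3) ^ 3 * d ^ resistanceExp * energy (n + 1) u := by
        gcongr
        exact energy_comp_sgMap_add_le n u hij
    _ = 2 * (5 / 3) ^ 3 * energy (n + 1) u * d ^ resistanceExp := by ring

lemma sq_sub_le_energy_mul_rpow {n : ℕ} {x y : Pt} (hx : x ∈ Vn n) (hy : y ∈ Vn n) (u : Pt → ℝ) :
    (u x - u y) ^ 2 ≤ 2 * (5 / 3) ^ 3 * energy n u * ‖x - y‖ ^ resistanceExp := by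
  induction n generalizing x y u with
  | zero =>
    obtain ⟨k, -, rfl⟩ := Finset.mem_image.1 (Vn_zero ▸ hy)
    have hE := energy_nonneg 0 u
    calc (u x - u (ptA k)) ^ 2
        ≤ (5 / 3) ^ 2 * energy 0 u * ‖x - ptA k‖ ^ resistanceExp :=
          sq_sub_ptA_le_energy_mul_rpow hx u k
      _ ≤ 2 * (5 / 3) ^ 3 * energy 0 u * ‖x - ptA k‖ ^ resistanceExp := by
          gcongr
          norm_num
  | succ n ih =>
    obtain ⟨i, x', hx', rfl⟩ := mem_Vn_succ.1 hx
    obtain ⟨j, y', hy', rfl⟩ := mem_Vn_succ.1 hy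
    obtain rfl | hij := eq_or_ne i j
    · calc (u (sgMap i x') - u (sgMap i y')) ^ 2
          ≤ 2 * (5 / 3) ^ 3 * (energy n (u ∘ sgMap i) * ‖x' - y'‖ ^ resistanceExp) := by
            rw [← mul_assoc]
            exact ih hx' hy' (u ∘ sgMap i)
        _ ≤ 2 * (5 / 3) ^ 3 *
              (energy (n + 1) u * ‖sgMap i x' - sgMap i y'‖ ^ resistanceExp) := by
            exact mul_le_mul_of_nonneg_left (energy_comp_sgMap_mul_rpow_le n u i x' y')
              (by positivity)
        _ = _ := (mul_assoc _ _ _).symm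
    · exact sq_sub_le_energy_mul_rpow_of_ne hx' hy' u hij

lemma resistanceExp_div_two : resistanceExp / 2 = Real.log (5 / 3) / Real.log 4 := by
  rw [resistanceExp, Real.logb, show (4 : ℝ) = 2 ^ 2 by norm_num, Real.log_pow, div_div,
    Nat.cast_ofNat, mul_comm]

lemma FiniteEnergy.abs_sub_le {u : Pt → ℝ} (hu : FiniteEnergy u) {x y : Pt} (hx : x ∈ Vstar)
    (hy : y ∈ Vstar) :
    |u x - u y| ≤ 6 * √(⨆ n, energy n u) * ‖x - y‖ ^ (resistanceExp / 2) := by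
  obtain ⟨n, hxn⟩ := mem_iUnion.1 hx
  obtain ⟨m, hym⟩ := mem_iUnion.1 hy
  have hsup : energy (max n m) u ≤ ⨆ n, energy n u := le_ciSup hu _
  have hnonneg := energy_nonneg (max n m) u
  have hE : 0 ≤ ⨆ n, energy n u := hnonneg.trans hsup
  refine abs_le_of_sq_le_sq ?_ (by positivity)
  calc (u x - u y) ^ 2
      ≤ 2 * (5 / 3) ^ 3 * energy (max n m) u * ‖x - y‖ ^ resistanceExp :=
        sq_sub_le_energy_mul_rpow (Vn_monotone (le_max_left n m) hxn)
          (Vn_monotone (le_max_right n m) hym) u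
    _ ≤ 6 ^ 2 * (⨆ n, energy n u) * ‖x - y‖ ^ resistanceExp := by
        gcongr
        norm_num
    _ = (6 * √(⨆ n, energy n u) * ‖x - y‖ ^ (resistanceExp / 2)) ^ 2 := by
        rw [mul_pow, mul_pow, Real.sq_sqrt hE, ← Real.rpow_mul_natCast (norm_nonneg _),
          Nat.cast_ofNat, div_mul_cancel₀ _ two_ne_zero]

end Resistance

/-- With `α = log(5/3)/log 4`: if `f : V* → ℝ` has finite energy
`𝓔(f,f) = supₙ 𝓔ₙ(f,f) < ∞`, then `|f(x) − f(y)| ≤ 6 √(𝓔(f,f)) ‖x−y‖^α` on `V*`,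
and `f` extends uniquely to a continuous (indeed `α`-Hölder continuous, with the
same constant) function on `V`. -/
theorem statement6 (u : Pt → ℝ) (hu : FiniteEnergy u) :
    (∀ x ∈ Vstar, ∀ y ∈ Vstar,
        |u x - u y| ≤ 6 * Real.sqrt (⨆ n : ℕ, energy n u) *
          ‖x - y‖ ^ (Real.log (5 / 3) / Real.log 4)) ∧
    ∃ g : C(sg, ℝ),
      (∀ x : Pt, ∀ hx : x ∈ Vstar, g ⟨x, Vstar_subset_sg hx⟩ = u x) ∧
      (∀ p q : sg, |g p - g q| ≤ 6 * Real.sqrt (⨆ n : ℕ, energy n u) *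
          ‖(p : Pt) - (q : Pt)‖ ^ (Real.log (5 / 3) / Real.log 4)) ∧
      ∀ g' : C(sg, ℝ), (∀ x : Pt, ∀ hx : x ∈ Vstar, g' ⟨x, Vstar_subset_sg hx⟩ = u x) →
        g' = g := by
  rw [← resistanceExp_div_two]
  have bound := fun x hx y hy => hu.abs_sub_le (x := x) (y := y) hx hy
  set C : ℝ≥0 := ⟨6 * √(⨆ n, energy n u), by positivity⟩
  set r : ℝ≥0 := ⟨resistanceExp / 2, (half_pos resistanceExp_pos).le⟩
  have holder : HolderOnWith C r u Vstar := holderOnWith_of_dist_le fun x hx y hy => by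
    rw [Real.dist_eq, dist_eq_norm]
    exact bound x hx y hy
  obtain ⟨g, hg, hgu⟩ := exists_holderWith_extend_closure holder (half_pos resistanceExp_pos)
  refine ⟨bound, g, hgu, fun p q => ?_, fun g' hg' =>
    continuousMap_closure_ext fun x hx => (hg' x hx).trans (hgu x hx).symm⟩
  have hdist : dist p q = ‖(p : Pt) - q‖ := by rw [Subtype.dist_eq, dist_eq_norm]
  rw [← hdist]
  exact hg.dist_le p q

end
end

section
/- The set of continuous functions g : V → ℝ whose restriction to V* has finite energy, i.e. sup_{n≥0} 𝓔_n(g|_{V_n}, g|_{V_n}) < ∞, is dense in the space C(V) of continuous real-valued functions on V with the supremum norm. -/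
open Set MeasureTheory Filter Topology
open scoped Classical ENNReal NNReal BoundedContinuousFunction

noncomputable section

/-!
A continuous function `g` is uniformly close to the function that agrees with `g` on `Vₙ` and is
harmonic on every cell of level `n`. A harmonic function is determined by its values at the three
corners: on the first-level cells it is harmonic with corner values given by the 1/5–2/5 rule, so
that the three harmonic coordinates together are the fixed point of a contraction on the maps from
the gasket to the simplex. By the same rule, refining the subdivision does not change the
renormalised energy of a harmonic function, so the energies of a piecewise harmonic function on the
cells are bounded.

The graphs `Γₙ` are defined by distance and so contain, besides the sides of the cells of level `n`,
edges between different cells near every point where two larger cells meet. Such an edge connects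
the two `n`-cells touching at that point, hence its energy is at most a multiple of the energies of
these two cells. As every `n`-cell is needed for a bounded number of edges only, the graph energy is
bounded by a constant times the energy on the cells.
-/

namespace SierpinskiGasket

/-! ### The cells of the gasket -/

lemma eq_single_of_mem_stdSimplex {ι : Type*} [Fintype ι] [DecidableEq ι] {p : ι → ℝ}
    (hp : p ∈ stdSimplex ℝ ι) {j : ι} (hj : 1 ≤ p j) : p = Pi.single j 1 := by
  funext k
  obtain rfl | hk := eq_or_ne k j
  · rw [Pi.single_eq_same]
    exact ((mem_Icc_of_mem_stdSimplex hp k).2).antisymm hj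
  · have hsum : p k + p j ≤ 1 := hp.2 ▸
      Finset.add_le_sum (fun l _ ↦ hp.1 l) (Finset.mem_univ k) (Finset.mem_univ j) hk
    rw [Pi.single_eq_of_ne hk]
    linarith [hp.1 k]

lemma mem_Vn_zero {x : Pt} : x ∈ Vn 0 ↔ ∃ i, ptA i = x := by
  simp [Vn, Fin.exists_fin_succ, eq_comm]

lemma mem_Vn_succ {n : ℕ} {x : Pt} : x ∈ Vn (n + 1) ↔ ∃ i, ∃ y ∈ Vn n, sgMap i y = x := by
  simp [Vn, Fin.exists_fin_succ]

lemma dist_sgMap (i : Fin 3) (x y : Pt) : dist (sgMap i x) (sgMap i y) = dist x y / 2 := by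
  simp only [sgMap, dist_smul₀, dist_add_right, norm_inv, Real.norm_ofNat]
  ring

lemma continuous_sgMap (i : Fin 3) : Continuous (sgMap i) := by
  unfold sgMap
  fun_prop

lemma sgMap_injective (i : Fin 3) : Function.Injective (sgMap i) := fun x y h ↦ by
  have := dist_sgMap i x y
  rw [h, dist_self] at this
  exact dist_eq_zero.1 (by linarith)

lemma sgMap_ptA_comm (i j : Fin 3) : sgMap i (ptA j) = sgMap j (ptA i) := by
  rw [sgMap, sgMap, add_comm]

lemma sgMap_ptA_self (i : Fin 3) : sgMap i (ptA i) = ptA i := by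
  rw [sgMap, ← two_smul ℝ, inv_smul_smul₀ two_ne_zero]

lemma ptA_mem_sg (i : Fin 3) : ptA i ∈ sg := Vn_subset_sg (mem_Vn_zero.2 ⟨i, rfl⟩)

lemma mapsTo_sgMap_sg (i : Fin 3) : MapsTo (sgMap i) sg sg := by
  refine MapsTo.closure (fun x hx ↦ ?_) (continuous_sgMap i)
  obtain ⟨n, hn⟩ := mem_iUnion.1 hx
  exact mem_iUnion.2 ⟨n + 1, mem_Vn_succ.2 ⟨i, x, hn, rfl⟩⟩

lemma sg_subset_of_isClosed {C : Set Pt} (hC : IsClosed C) (hptA : ∀ i, ptA i ∈ C)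
    (hmaps : ∀ i, MapsTo (sgMap i) C C) : sg ⊆ C := by
  refine closure_minimal (iUnion_subset fun n ↦ ?_) hC
  induction n with
  | zero =>
    intro x hx
    obtain ⟨i, rfl⟩ := mem_Vn_zero.1 hx
    exact hptA i
  | succ n ih =>
    intro x hx
    obtain ⟨i, y, hy, rfl⟩ := mem_Vn_succ.1 hx
    exact hmaps i (ih hy)

lemma isCompact_sg : IsCompact sg := by
  have hull_compact := (finite_range ptA).isCompact_convexHull ℝ
  refine hull_compact.of_isClosed_subset isClosed_closure
    (sg_subset_of_isClosed hull_compact.isClosed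
      (fun i ↦ subset_convexHull ℝ _ (mem_range_self i)) fun i x hx ↦ ?_)
  rw [sgMap, smul_add]
  exact convex_convexHull ℝ _ hx (subset_convexHull ℝ _ (mem_range_self i))
    (by norm_num) (by norm_num) (by norm_num)

instance : CompactSpace sg := isCompact_iff_compactSpace.1 isCompact_sg

lemma exists_sgMap_eq {x : Pt} (hx : x ∈ sg) : ∃ i, ∃ y ∈ sg, sgMap i y = x := by
  have hclosed : IsClosed (⋃ i, sgMap i '' sg) :=
    isClosed_iUnion_of_finite fun i ↦ (isCompact_sg.image (continuous_sgMap i)).isClosed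
  have hsub : (⋃ i, sgMap i '' sg) ⊆ sg :=
    iUnion_subset fun i ↦ (mapsTo_sgMap_sg i).image_subset
  simpa using sg_subset_of_isClosed hclosed
    (fun i ↦ mem_iUnion.2 ⟨i, ptA i, ptA_mem_sg i, sgMap_ptA_self i⟩)
    (fun i x hx ↦ mem_iUnion.2 ⟨i, x, hsub hx, rfl⟩) hx

/-- The barycentric coordinates of a point with respect to the triangle `a₀ a₁ a₂`. -/
def bary (z : Pt) : Fin 3 → ℝ :=
  ![1 - z 0 - z 1 / √3, z 0 - z 1 / √3, 2 * (z 1 / √3)]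

lemma sum_bary (z : Pt) : ∑ i, bary z i = 1 := by
  simp [bary, Fin.sum_univ_three]
  ring

lemma continuous_bary : Continuous bary := by
  refine continuous_pi fun i ↦ ?_
  fin_cases i <;> simp only [bary, Fin.zero_eta, Fin.mk_one, Fin.reduceFinMk, Matrix.cons_val] <;>
    fun_prop

lemma bary_ptA (i : Fin 3) : bary (ptA i) = Pi.single i 1 := by
  have : √3 ≠ 0 := by positivity
  funext j
  fin_cases i <;> fin_cases j <;> simp [bary, ptA] <;> field_simp <;> norm_num

lemma bary_injective : Function.Injective bary := fun x y h ↦ by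
  have h₁ : x 0 - x 1 / √3 = y 0 - y 1 / √3 := congrFun h 1
  have h₂ : x 1 = y 1 := by simpa [bary] using congrFun h 2
  ext i
  fin_cases i
  · simpa [h₂] using h₁
  · exact h₂

lemma bary_sgMap (i : Fin 3) (z : Pt) (j : Fin 3) :
    bary (sgMap i z) j = (bary z j + (Pi.single i 1 : Fin 3 → ℝ) j) / 2 := by
  rw [← bary_ptA]
  fin_cases j <;> simp [bary, sgMap] <;> ring

lemma bary_sgMap_self (i : Fin 3) (z : Pt) : bary (sgMap i z) i = (bary z i + 1) / 2 := by
  rw [bary_sgMap, Pi.single_eq_same]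

lemma bary_sgMap_of_ne {i j : Fin 3} (hij : i ≠ j) (z : Pt) :
    bary (sgMap i z) j = bary z j / 2 := by
  rw [bary_sgMap, Pi.single_eq_of_ne hij.symm, add_zero]

lemma abs_bary_sub_le (x y : Pt) (j : Fin 3) : |bary x j - bary y j| ≤ 2 / √3 * dist x y := by
  have hsq : √3 ^ 2 = (3 : ℝ) := Real.sq_sqrt (by norm_num)
  have hheight : (x 1 - y 1) ^ 2 = 3 * (x 1 / √3 - y 1 / √3) ^ 2 := by
    rw [← sub_div, div_pow, hsq]
    ring
  refine abs_le_of_sq_le_sq ?_ (by positivity)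
  rw [mul_pow, div_pow, hsq, EuclideanSpace.dist_sq_eq, Fin.sum_univ_two, Real.dist_eq,
    Real.dist_eq, sq_abs, sq_abs, hheight]
  have hplus := sq_nonneg (x 0 - y 0 - 3 * (x 1 / √3 - y 1 / √3))
  have hminus := sq_nonneg (x 0 - y 0 + 3 * (x 1 / √3 - y 1 / √3))
  have hzero := sq_nonneg (x 0 - y 0)
  fin_cases j <;> simp only [bary, Fin.zero_eta, Fin.mk_one, Fin.reduceFinMk, Matrix.cons_val] <;>
    nlinarith only [hplus, hminus, hzero]

lemma bary_mem_stdSimplex {x : Pt} (hx : x ∈ sg) : bary x ∈ stdSimplex ℝ (Fin 3) := by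
  refine sg_subset_of_isClosed (C := bary ⁻¹' stdSimplex ℝ (Fin 3))
    ((isClosed_stdSimplex _ _).preimage continuous_bary) (fun i ↦ ?_) (fun i z hz ↦ ?_) hx
  · rw [mem_preimage, bary_ptA]
    exact single_mem_stdSimplex ℝ i
  · refine ⟨fun j ↦ ?_, sum_bary _⟩
    rw [bary_sgMap]
    exact div_nonneg (add_nonneg (hz.1 j) ((single_mem_stdSimplex ℝ i).1 j)) zero_le_two

lemma eq_ptA_of_one_le_bary {x : Pt} (hx : x ∈ sg) {j : Fin 3} (h : 1 ≤ bary x j) :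
    x = ptA j :=
  bary_injective ((eq_single_of_mem_stdSimplex (bary_mem_stdSimplex hx) h).trans
    (bary_ptA j).symm)

lemma eq_ptA_of_sgMap_eq_sgMap {i j : Fin 3} (hij : i ≠ j) {x y : Pt} (hx : x ∈ sg) (hy : y ∈ sg)
    (h : sgMap i x = sgMap j y) : x = ptA j := by
  have hj : bary x j / 2 = (bary y j + 1) / 2 := by
    rw [← bary_sgMap_of_ne hij, h, bary_sgMap_self]
  have := (bary_mem_stdSimplex hy).1 j
  exact eq_ptA_of_one_le_bary hx (by linarith)

/-! ### Gluing and self-similar maps -/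

/-- The vertices of the initial triangle, as points of the gasket. -/
def corner (i : Fin 3) : sg := ⟨ptA i, ptA_mem_sg i⟩

/-- The contraction `sgMap i` as a self-map of the gasket; its range is the `i`-th cell. -/
def cellMap (i : Fin 3) : C(sg, sg) where
  toFun := (mapsTo_sgMap_sg i).restrict
  continuous_toFun := (continuous_sgMap i).continuousOn.mapsToRestrict _

lemma cellMap_corner_self (i : Fin 3) : cellMap i (corner i) = corner i :=
  Subtype.ext (sgMap_ptA_self i)

lemma cellMap_corner_comm (i j : Fin 3) : cellMap i (corner j) = cellMap j (corner i) :=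
  Subtype.ext (sgMap_ptA_comm i j)

lemma dist_cellMap (i : Fin 3) (x y : sg) : dist (cellMap i x) (cellMap i y) = dist x y / 2 :=
  dist_sgMap i x y

lemma exists_cellMap_eq (x : sg) : ∃ i y, cellMap i y = x := by
  obtain ⟨i, y, hy, hxy⟩ := exists_sgMap_eq x.2
  exact ⟨i, ⟨y, hy⟩, Subtype.ext hxy⟩

lemma isQuotientMap_sigma_cellMap : IsQuotientMap (ContinuousMap.sigma cellMap) :=
  .of_surjective_continuous (fun x ↦ by
    obtain ⟨i, y, hxy⟩ := exists_cellMap_eq x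
    exact ⟨⟨i, y⟩, hxy⟩) (ContinuousMap.sigma cellMap).continuous

section Gluing

variable {Y : Type*} [TopologicalSpace Y]

lemma factorsThrough_sigma_cellMap {g : Fin 3 → C(sg, Y)}
    (hg : ∀ i j, g i (corner j) = g j (corner i)) :
    Function.FactorsThrough (ContinuousMap.sigma g) (ContinuousMap.sigma cellMap) := by
  rintro ⟨i, x⟩ ⟨j, y⟩ hxy
  have hxy : sgMap i x = sgMap j y := congrArg Subtype.val hxy
  obtain rfl | hij := eq_or_ne i j
  · obtain rfl : x = y := Subtype.ext (sgMap_injective i hxy)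
    rfl
  · have hx : x = corner j := Subtype.ext (eq_ptA_of_sgMap_eq_sgMap hij x.2 y.2 hxy)
    have hy : y = corner i := Subtype.ext (eq_ptA_of_sgMap_eq_sgMap hij.symm y.2 x.2 hxy.symm)
    rw [hx, hy]
    exact hg i j

/-- The function on the gasket which is `g i` on the `i`-th cell, provided that these functions
agree at the points where two cells meet. -/
def glue (g : Fin 3 → C(sg, Y)) (hg : ∀ i j, g i (corner j) = g j (corner i)) : C(sg, Y) :=
  isQuotientMap_sigma_cellMap.lift (ContinuousMap.sigma g) (factorsThrough_sigma_cellMap hg)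

lemma glue_cellMap {g : Fin 3 → C(sg, Y)} (hg : ∀ i j, g i (corner j) = g j (corner i))
    (i : Fin 3) (x : sg) : glue g hg (cellMap i x) = g i x :=
  DFunLike.congr_fun (isQuotientMap_sigma_cellMap.lift_comp (ContinuousMap.sigma g)
    (factorsThrough_sigma_cellMap hg)) ⟨i, x⟩

lemma glue_corner {g : Fin 3 → C(sg, Y)} (hg : ∀ i j, g i (corner j) = g j (corner i))
    (i : Fin 3) : glue g hg (corner i) = g i (corner i) := by
  rw [← glue_cellMap hg, cellMap_corner_self]

end Gluing

-- The Banach fixed point theorem for `h ↦ glue (fun i ↦ A i ∘ h)`.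
theorem exists_selfSimilar {Y : Type*} [MetricSpace Y] [CompleteSpace Y] {K : ℝ≥0} (hK : K < 1)
    {A : Fin 3 → Y → Y} (hA : ∀ i, LipschitzWith K (A i)) {y : Fin 3 → Y}
    (hself : ∀ i, A i (y i) = y i) (hcomm : ∀ i j, A i (y j) = A j (y i))
    (h₀ : C(sg, Y)) (hh₀ : ∀ i, h₀ (corner i) = y i) :
    ∃ h : C(sg, Y), (∀ i, h (corner i) = y i) ∧ ∀ i x, h (cellMap i x) = A i (h x) := by
  let Z : Set C(sg, Y) := {h | ∀ i, h (corner i) = y i}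
  have hZ : IsClosed Z := by
    simp only [Z, ofPred_forall]
    exact isClosed_iInter fun i ↦ isClosed_eq (by fun_prop) (by fun_prop)
  have := hZ.completeSpace_coe
  have : Nonempty Z := ⟨h₀, hh₀⟩
  let g (h : Z) (i : Fin 3) : C(sg, Y) := .comp ⟨A i, (hA i).continuous⟩ h
  have hg (h : Z) (i j : Fin 3) : g h i (corner j) = g h j (corner i) := by
    simp [g, h.2 _, hcomm i j]
  let S (h : Z) : Z := ⟨glue (g h) (hg h), fun i ↦ by
    rw [glue_corner]
    simp [g, h.2 _, hself]⟩
  have hS : ContractingWith K S := by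
    refine ⟨hK, .of_dist_le_mul fun h k ↦ (ContinuousMap.dist_le (by positivity)).2 fun x ↦ ?_⟩
    obtain ⟨i, x, rfl⟩ := exists_cellMap_eq x
    rw [glue_cellMap, glue_cellMap]
    exact ((hA i).dist_le_mul _ _).trans
      (mul_le_mul_of_nonneg_left (ContinuousMap.dist_apply_le_dist _) K.2)
  refine ⟨hS.fixedPoint, hS.fixedPoint.2, fun i x ↦ ?_⟩
  calc hS.fixedPoint.1 (cellMap i x)
    _ = (S hS.fixedPoint).1 (cellMap i x) := by rw [hS.fixedPoint_isFixedPt]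
    _ = A i (hS.fixedPoint.1 x) := glue_cellMap (hg _) i x

/-! ### Harmonic functions -/

/-- The values at the corners of the `i`-th cell of the harmonic function with boundary values `a`:
the common corner of the cells `i` and `k` gets the value `(2 a i + 2 a k + a l) / 5`, where `l` is
the third index. -/
def harmonicExt (i : Fin 3) (a : Fin 3 → ℝ) (k : Fin 3) : ℝ :=
  if k = i then a i else (a i + a k + ∑ l, a l) / 5

/-- The transpose of `harmonicExt i`, restricted to vectors whose coordinates sum up to `1`: if `p`
lists the values at `x` of the three harmonic functions that are `1` at one corner and `0` at the
others, then `harmonicCellMap i p` lists their values at `cellMap i x`. -/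
def harmonicCellMap (i : Fin 3) (p : Fin 3 → ℝ) (l : Fin 3) : ℝ :=
  if l = i then (3 * p i + 2) / 5 else (1 + p l - p i) / 5

lemma mapsTo_harmonicCellMap (i : Fin 3) :
    MapsTo (harmonicCellMap i) (stdSimplex ℝ (Fin 3)) (stdSimplex ℝ (Fin 3)) := by
  intro p hp
  have hsum := hp.2
  rw [Fin.sum_univ_three] at hsum
  refine ⟨fun l ↦ ?_, ?_⟩
  · have hl := hp.1 l
    have hi := hp.1 i
    have hi' := (mem_Icc_of_mem_stdSimplex hp i).2
    unfold harmonicCellMap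
    split_ifs <;> linarith
  · fin_cases i <;> simp [harmonicCellMap, Fin.sum_univ_three] <;> linarith

lemma lipschitzWith_harmonicCellMap (i : Fin 3) : LipschitzWith (3 / 5) (harmonicCellMap i) := by
  refine .of_dist_le_mul fun p q ↦ (dist_pi_le_iff (by positivity)).2 fun l ↦ ?_
  have hl := abs_le.1 (dist_le_pi_dist p q l)
  have hi := abs_le.1 (dist_le_pi_dist p q i)
  have hcoe : ((3 / 5 : ℝ≥0) : ℝ) = 3 / 5 := by simp
  rw [Real.dist_eq, hcoe, abs_le]
  unfold harmonicCellMap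
  split_ifs <;> constructor <;> linarith

lemma harmonicCellMap_single_self (i : Fin 3) :
    harmonicCellMap i (Pi.single i 1) = Pi.single i 1 := by
  funext l
  obtain rfl | hl := eq_or_ne l i
  · norm_num [harmonicCellMap]
  · simp [harmonicCellMap, hl]

lemma harmonicCellMap_single_comm (i j : Fin 3) :
    harmonicCellMap i (Pi.single j 1) = harmonicCellMap j (Pi.single i 1) := by
  funext l
  fin_cases i <;> fin_cases j <;> fin_cases l <;> norm_num [harmonicCellMap, Pi.single_apply]

lemma sum_mul_harmonicCellMap (i : Fin 3) (a : Fin 3 → ℝ) {p : Fin 3 → ℝ} (hp : ∑ k, p k = 1) :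
    ∑ k, a k * harmonicCellMap i p k = ∑ k, harmonicExt i a k * p k := by
  simp only [Fin.sum_univ_three] at hp
  have hp₀ : p 0 = 1 - p 1 - p 2 := by linarith
  fin_cases i <;> simp [harmonicCellMap, harmonicExt, Fin.sum_univ_three, hp₀] <;> ring

lemma exists_harmonicMap : ∃ h : C(sg, stdSimplex ℝ (Fin 3)),
    (∀ i, (h (corner i) : Fin 3 → ℝ) = Pi.single i 1) ∧
      ∀ i x, (h (cellMap i x) : Fin 3 → ℝ) = harmonicCellMap i (h x) := by
  obtain ⟨h, hcorner, hcell⟩ := exists_selfSimilar (K := 3 / 5)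
    (A := fun i ↦ (mapsTo_harmonicCellMap i).restrict)
    (y := fun i ↦ ⟨Pi.single i 1, single_mem_stdSimplex ℝ i⟩)
    (h₀ := ⟨fun x ↦ ⟨bary x, bary_mem_stdSimplex x.2⟩,
      (continuous_bary.comp continuous_subtype_val).subtype_mk _⟩)
    (by norm_num [div_lt_one₀])
    (fun i ↦ (lipschitzWith_harmonicCellMap i).lipschitzOnWith.mapsToRestrict _)
    (fun i ↦ Subtype.ext (harmonicCellMap_single_self i))
    (fun i j ↦ Subtype.ext (harmonicCellMap_single_comm i j))
    (fun i ↦ Subtype.ext (bary_ptA i))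
  exact ⟨h, fun i ↦ congrArg Subtype.val (hcorner i), fun i x ↦ congrArg Subtype.val (hcell i x)⟩

/-- The harmonic coordinates on the gasket. The coordinate `k` is the harmonic function which is `1`
at `corner k` and `0` at the two other corners. -/
def harmonicMap : C(sg, stdSimplex ℝ (Fin 3)) := exists_harmonicMap.choose

lemma harmonicMap_corner (i : Fin 3) : (harmonicMap (corner i) : Fin 3 → ℝ) = Pi.single i 1 :=
  exists_harmonicMap.choose_spec.1 i

lemma harmonicMap_cellMap (i : Fin 3) (x : sg) :
    (harmonicMap (cellMap i x) : Fin 3 → ℝ) = harmonicCellMap i (harmonicMap x) :=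
  exists_harmonicMap.choose_spec.2 i x

/-- The harmonic function on the gasket with values `a` at the three corners. -/
def harmonic (a : Fin 3 → ℝ) : C(sg, ℝ) where
  toFun x := ∑ k, a k * harmonicMap x k
  continuous_toFun := continuous_finsetSum _ fun k _ ↦ continuous_const.mul
    ((continuous_apply k).comp (continuous_subtype_val.comp harmonicMap.continuous))

lemma harmonic_apply (a : Fin 3 → ℝ) (x : sg) : harmonic a x = ∑ k, a k * harmonicMap x k := rfl

lemma harmonic_corner (a : Fin 3 → ℝ) (i : Fin 3) : harmonic a (corner i) = a i := by
  simp [harmonic_apply, harmonicMap_corner, Pi.single_apply]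

lemma harmonic_cellMap (a : Fin 3 → ℝ) (i : Fin 3) (x : sg) :
    harmonic a (cellMap i x) = harmonic (harmonicExt i a) x := by
  simp only [harmonic_apply, harmonicMap_cellMap]
  exact sum_mul_harmonicCellMap i a (harmonicMap x).2.2

lemma dist_harmonic_le {a : Fin 3 → ℝ} {c ε : ℝ} (h : ∀ k, dist (a k) c ≤ ε) (x : sg) :
    dist (harmonic a x) c ≤ ε := by
  have : ∑ k, harmonicMap x k • a k ∈ Metric.closedBall c ε :=
    (convex_closedBall c ε).sum_mem (fun k _ ↦ (harmonicMap x).2.1 k) (harmonicMap x).2.2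
      fun k _ ↦ h k
  simpa only [harmonic_apply, smul_eq_mul, mul_comm, Metric.mem_closedBall] using this

/-- The energy of a function on the complete graph with three vertices. -/
def triangleEnergy (a : Fin 3 → ℝ) : ℝ := (a 0 - a 1) ^ 2 + (a 1 - a 2) ^ 2 + (a 2 - a 0) ^ 2

lemma triangleEnergy_nonneg (a : Fin 3 → ℝ) : 0 ≤ triangleEnergy a := by
  unfold triangleEnergy
  positivity

lemma sum_triangleEnergy_harmonicExt (a : Fin 3 → ℝ) :
    ∑ i, triangleEnergy (harmonicExt i a) = 3 / 5 * triangleEnergy a := by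
  simp [triangleEnergy, harmonicExt, Fin.sum_univ_three]
  ring

/-! ### Comparison of the graph energy with the energy on the cells -/

/-- The energy of `u` at level `n` when only the edges within the cells of level `n` are counted. It
omits the edges of `Γₙ` that join two different cells, which exist for `n ≥ 2`. -/
def cellEnergy : ℕ → (Pt → ℝ) → ℝ
  | 0, u => triangleEnergy (u ∘ ptA)
  | n + 1, u => 5 / 3 * ∑ i, cellEnergy n (u ∘ sgMap i)

/-- The energy, without the factor `(5/3)ⁿ`, of `u` on the cell of level `n` at the corner `j`. -/
def cornerEnergy (n : ℕ) (j : Fin 3) (u : Pt → ℝ) : ℝ :=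
  triangleEnergy (u ∘ (sgMap j)^[n] ∘ ptA)

/-- The contribution of an ordered pair of points to the energy `𝓔ₙ`. -/
def edgeTerm (n : ℕ) (u : Pt → ℝ) (x y : Pt) : ℝ := if isEdge n x y then (u y - u x) ^ 2 else 0

/-- The energy `𝓔ₙ` increased by a multiple of the energies of the three corner cells. The increment
pays for the edges leaving these cells when three copies of the gasket are put together, and makes
the quantity subadditive under this operation. -/
def augmentedEnergy (n : ℕ) (u : Pt → ℝ) : ℝ :=
  energy n u + 6 * (5 / 3) ^ n * ∑ j, cornerEnergy n j u

lemma isEdge_iff_dist {n : ℕ} {x y : Pt} : isEdge n x y ↔ dist x y = (1 / 2) ^ n := by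
  rw [isEdge, dist_eq_norm, zpow_neg, zpow_natCast, one_div, inv_pow]

lemma isEdge_sgMap {n : ℕ} {i : Fin 3} {x y : Pt} :
    isEdge (n + 1) (sgMap i x) (sgMap i y) ↔ isEdge n x y := by
  rw [isEdge_iff_dist, isEdge_iff_dist, dist_sgMap, pow_succ, mul_one_div,
    div_left_inj' two_ne_zero]

lemma isEdge_comm {n : ℕ} {x y : Pt} : isEdge n x y ↔ isEdge n y x := by
  rw [isEdge_iff_dist, isEdge_iff_dist, dist_comm]

lemma edgeTerm_nonneg (n : ℕ) (u : Pt → ℝ) (x y : Pt) : 0 ≤ edgeTerm n u x y := by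
  unfold edgeTerm
  positivity

lemma edgeTerm_le (n : ℕ) (u : Pt → ℝ) (x y : Pt) : edgeTerm n u x y ≤ (u y - u x) ^ 2 := by
  unfold edgeTerm
  split_ifs
  exacts [le_rfl, sq_nonneg _]

lemma isEdge_of_edgeTerm_ne_zero {n : ℕ} {u : Pt → ℝ} {x y : Pt} (h : edgeTerm n u x y ≠ 0) :
    isEdge n x y :=
  of_not_not fun hxy ↦ h (if_neg hxy)

lemma edgeTerm_sgMap (n : ℕ) (u : Pt → ℝ) (i : Fin 3) (x y : Pt) :
    edgeTerm (n + 1) u (sgMap i x) (sgMap i y) = edgeTerm n (u ∘ sgMap i) x y := by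
  simp only [edgeTerm, isEdge_sgMap, Function.comp_apply]

lemma energy_eq_sum_edgeTerm (n : ℕ) (u : Pt → ℝ) :
    energy n u = (5 / 3) ^ n * (1 / 2) * ∑ x ∈ Vn n, ∑ y ∈ Vn n, edgeTerm n u x y := by
  simp only [energy, energyBi, edgeTerm, sq]

lemma sum_le_sum_comp {α ι N : Type*} [AddCommMonoid N] [PartialOrder N] [AddLeftMono N]
    {s : Finset α} {t : Finset ι} {φ : ι → α} {F : α → N}
    (hF : ∀ x, 0 ≤ F x) (hφ : ∀ x ∈ s, F x ≠ 0 → ∃ i ∈ t, φ i = x) :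
    ∑ x ∈ s, F x ≤ ∑ i ∈ t, F (φ i) :=
  calc ∑ x ∈ s, F x
    _ = ∑ x ∈ s with F x ≠ 0, F x := (Finset.sum_filter_ne_zero s).symm
    _ ≤ ∑ x ∈ t.image φ, F x := Finset.sum_le_sum_of_subset_of_nonneg
      (fun x hx ↦ Finset.mem_image.2 (hφ x (Finset.mem_filter.1 hx).1 (Finset.mem_filter.1 hx).2))
      fun x _ _ ↦ hF x
    _ ≤ ∑ i ∈ t, F (φ i) := Finset.sum_image_le_of_nonneg fun x _ ↦ hF x

lemma sum_Vn_zero_le {F : Pt → ℝ} (hF : ∀ x, 0 ≤ F x) : ∑ x ∈ Vn 0, F x ≤ ∑ i, F (ptA i) :=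
  sum_le_sum_comp hF fun _ hx _ ↦ by simpa using mem_Vn_zero.1 hx

lemma sum_Vn_succ_le {n : ℕ} {F : Pt → ℝ} (hF : ∀ x, 0 ≤ F x) :
    ∑ x ∈ Vn (n + 1), F x ≤ ∑ i, ∑ x ∈ Vn n, F (sgMap i x) := by
  rw [← Finset.sum_product']
  refine sum_le_sum_comp (φ := fun p : Fin 3 × Pt ↦ sgMap p.1 p.2) hF fun x hx _ ↦ ?_
  obtain ⟨i, y, hy, hxy⟩ := mem_Vn_succ.1 hx
  exact ⟨(i, y), by simpa using hy, hxy⟩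

lemma iterate_sgMap_ptA_self (n : ℕ) (i : Fin 3) : (sgMap i)^[n] (ptA i) = ptA i :=
  Function.iterate_fixed (sgMap_ptA_self i) n

lemma iterate_sgMap_ptA_mem_sg (n : ℕ) (i k : Fin 3) : (sgMap i)^[n] (ptA k) ∈ sg :=
  (mapsTo_sgMap_sg i).iterate n (ptA_mem_sg k)

lemma exists_iterate_sgMap_ptA_eq {n : ℕ} {j : Fin 3} {x : Pt} (hx : x ∈ Vn n)
    (hxj : 1 - 2 * (1 / 2) ^ n < bary x j) : ∃ k, (sgMap j)^[n] (ptA k) = x := by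
  induction n generalizing x with
  | zero => exact mem_Vn_zero.1 hx
  | succ n ih =>
    obtain ⟨i, y, hy, rfl⟩ := mem_Vn_succ.1 hx
    obtain rfl | hij := eq_or_ne i j
    · rw [bary_sgMap_self, pow_succ] at hxj
      obtain ⟨k, rfl⟩ := ih hy (by linarith)
      exact ⟨k, Function.iterate_succ_apply' _ _ _⟩
    have hyj : bary y j ≤ 1 :=
      (mem_Icc_of_mem_stdSimplex (bary_mem_stdSimplex (Vn_subset_sg hy)) j).2
    rw [bary_sgMap_of_ne hij] at hxj
    obtain rfl | hn := Nat.eq_zero_or_pos n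
    · obtain ⟨k, rfl⟩ := mem_Vn_zero.1 hy
      obtain rfl : k = j := by
        by_contra hkj
        norm_num [bary_ptA, Pi.single_eq_of_ne' hkj] at hxj
      exact ⟨i, sgMap_ptA_comm k i⟩
    · have : ((1 : ℝ) / 2) ^ n ≤ 1 / 2 := pow_le_of_le_one (by norm_num) (by norm_num) hn.ne'
      rw [pow_succ] at hxj
      linarith

lemma exists_iterate_sgMap_ptA_eq_of_isEdge {n : ℕ} {i j : Fin 3} (hij : i ≠ j) {x y : Pt}
    (hx : x ∈ Vn n) (hy : y ∈ sg) (hxy : isEdge (n + 1) (sgMap i x) (sgMap j y)) :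
    ∃ k, (sgMap j)^[n] (ptA k) = x := by
  refine exists_iterate_sgMap_ptA_eq hx ?_
  have hbary := (abs_le.1 (abs_bary_sub_le (sgMap i x) (sgMap j y) j)).1
  rw [isEdge_iff_dist.1 hxy, bary_sgMap_of_ne hij, bary_sgMap_self] at hbary
  have hyj := (bary_mem_stdSimplex hy).1 j
  have hconst : 2 / √3 < 2 := div_lt_self two_pos (Real.lt_sqrt_of_sq_lt (by norm_num))
  have hstrict := mul_lt_mul_of_pos_right hconst (show 0 < ((1 : ℝ) / 2) ^ (n + 1) by positivity)
  rw [pow_succ] at hbary hstrict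
  linarith

lemma sum_sub_sq_le_triangleEnergy (a : Fin 3 → ℝ) (j : Fin 3) :
    ∑ k, (a k - a j) ^ 2 ≤ triangleEnergy a := by
  rw [Fin.sum_univ_three, triangleEnergy]
  fin_cases j <;> dsimp only [Fin.zero_eta, Fin.mk_one, Fin.reduceFinMk] <;>
    nlinarith only [sq_nonneg (a 0 - a 1), sq_nonneg (a 1 - a 2), sq_nonneg (a 2 - a 0)]

lemma sum_sum_sub_sq_le {a b : Fin 3 → ℝ} {i j : Fin 3} (h : a j = b i) :
    ∑ k, ∑ l, (b l - a k) ^ 2 ≤ 6 * (triangleEnergy a + triangleEnergy b) :=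
  calc ∑ k, ∑ l, (b l - a k) ^ 2
    _ ≤ ∑ k, ∑ l, (2 * (a k - a j) ^ 2 + 2 * (b l - b i) ^ 2) := by
      gcongr with k _ l _
      rw [h]
      nlinarith only [sq_nonneg (a k - b i + (b l - b i))]
    _ = 6 * (∑ k, (a k - a j) ^ 2 + ∑ l, (b l - b i) ^ 2) := by
      simp only [Fin.sum_univ_three]
      ring
    _ ≤ 6 * (triangleEnergy a + triangleEnergy b) := by
      gcongr <;> exact sum_sub_sq_le_triangleEnergy _ _

lemma sum_edgeTerm_sgMap_sgMap_le (n : ℕ) (u : Pt → ℝ) {i j : Fin 3} (hij : i ≠ j) :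
    ∑ x ∈ Vn n, ∑ y ∈ Vn n, edgeTerm (n + 1) u (sgMap i x) (sgMap j y) ≤
      6 * (cornerEnergy n j (u ∘ sgMap i) + cornerEnergy n i (u ∘ sgMap j)) := by
  let a (k : Fin 3) : Pt := (sgMap j)^[n] (ptA k)
  let b (l : Fin 3) : Pt := (sgMap i)^[n] (ptA l)
  have hjunction : sgMap i (a j) = sgMap j (b i) := by
    simp only [a, b, iterate_sgMap_ptA_self, sgMap_ptA_comm i j]
  calc ∑ x ∈ Vn n, ∑ y ∈ Vn n, edgeTerm (n + 1) u (sgMap i x) (sgMap j y)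
    _ ≤ ∑ k, ∑ y ∈ Vn n, edgeTerm (n + 1) u (sgMap i (a k)) (sgMap j y) := by
      refine sum_le_sum_comp (fun x ↦ Finset.sum_nonneg fun y _ ↦ edgeTerm_nonneg _ _ _ _)
        fun x hx hne ↦ ?_
      obtain ⟨y, hy, hxy⟩ := Finset.exists_ne_zero_of_sum_ne_zero hne
      simpa using exists_iterate_sgMap_ptA_eq_of_isEdge hij hx (Vn_subset_sg hy)
        (isEdge_of_edgeTerm_ne_zero hxy)
    _ ≤ ∑ k, ∑ l, edgeTerm (n + 1) u (sgMap i (a k)) (sgMap j (b l)) := by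
      gcongr with k
      refine sum_le_sum_comp (fun y ↦ edgeTerm_nonneg _ _ _ _) fun y hy hne ↦ ?_
      simpa using exists_iterate_sgMap_ptA_eq_of_isEdge hij.symm hy
        (iterate_sgMap_ptA_mem_sg n j k) (isEdge_comm.1 (isEdge_of_edgeTerm_ne_zero hne))
    _ ≤ ∑ k, ∑ l, (u (sgMap j (b l)) - u (sgMap i (a k))) ^ 2 := by
      gcongr
      exact edgeTerm_le _ _ _ _
    _ ≤ _ := sum_sum_sub_sq_le (congrArg u hjunction)

lemma sum_edgeTerm_succ_le (n : ℕ) (u : Pt → ℝ) :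
    ∑ x ∈ Vn (n + 1), ∑ y ∈ Vn (n + 1), edgeTerm (n + 1) u x y ≤
      ∑ i, ∑ j, ∑ x ∈ Vn n, ∑ y ∈ Vn n, edgeTerm (n + 1) u (sgMap i x) (sgMap j y) :=
  calc ∑ x ∈ Vn (n + 1), ∑ y ∈ Vn (n + 1), edgeTerm (n + 1) u x y
    _ ≤ ∑ i, ∑ x ∈ Vn n, ∑ y ∈ Vn (n + 1), edgeTerm (n + 1) u (sgMap i x) y :=
      sum_Vn_succ_le fun x ↦ Finset.sum_nonneg fun y _ ↦ edgeTerm_nonneg _ _ _ _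
    _ ≤ ∑ i, ∑ x ∈ Vn n, ∑ j, ∑ y ∈ Vn n, edgeTerm (n + 1) u (sgMap i x) (sgMap j y) := by
      gcongr
      exact sum_Vn_succ_le fun y ↦ edgeTerm_nonneg _ _ _ _
    _ = _ := by
      congr! 1 with i
      exact Finset.sum_comm

lemma cornerEnergy_succ (n : ℕ) (j : Fin 3) (u : Pt → ℝ) :
    cornerEnergy (n + 1) j u = cornerEnergy n j (u ∘ sgMap j) := by
  rw [cornerEnergy, cornerEnergy, Function.iterate_succ']
  rfl

lemma augmentedEnergy_succ_le (n : ℕ) (u : Pt → ℝ) :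
    augmentedEnergy (n + 1) u ≤ 5 / 3 * ∑ i, augmentedEnergy n (u ∘ sgMap i) := by
  have hsplit (i j : Fin 3) :
      ∑ x ∈ Vn n, ∑ y ∈ Vn n, edgeTerm (n + 1) u (sgMap i x) (sgMap j y) ≤
        if i = j then ∑ x ∈ Vn n, ∑ y ∈ Vn n, edgeTerm n (u ∘ sgMap i) x y
        else 6 * (cornerEnergy n j (u ∘ sgMap i) + cornerEnergy n i (u ∘ sgMap j)) := by
    split_ifs with hij
    · simp only [hij, edgeTerm_sgMap, le_refl]
    · exact sum_edgeTerm_sgMap_sgMap_le n u hij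
  have hsum := (sum_edgeTerm_succ_le n u).trans
    (Finset.sum_le_sum fun i _ ↦ Finset.sum_le_sum fun j _ ↦ hsplit i j)
  have hscaled := mul_le_mul_of_nonneg_left hsum
    (show (0 : ℝ) ≤ (5 / 3) ^ (n + 1) * (1 / 2) by positivity)
  simp only [augmentedEnergy, energy_eq_sum_edgeTerm, cornerEnergy_succ, Fin.sum_univ_three]
  simp only [Fin.sum_univ_three, ↓reduceIte, zero_ne_one, one_ne_zero, Fin.reduceEq] at hscaled
  rw [pow_succ] at hscaled ⊢
  linarith

lemma energy_zero_le (u : Pt → ℝ) : energy 0 u ≤ triangleEnergy (u ∘ ptA) := by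
  have hsum : ∑ x ∈ Vn 0, ∑ y ∈ Vn 0, edgeTerm 0 u x y ≤
      ∑ i, ∑ j, (u (ptA j) - u (ptA i)) ^ 2 :=
    calc ∑ x ∈ Vn 0, ∑ y ∈ Vn 0, edgeTerm 0 u x y
      _ ≤ ∑ i, ∑ y ∈ Vn 0, edgeTerm 0 u (ptA i) y :=
        sum_Vn_zero_le fun x ↦ Finset.sum_nonneg fun y _ ↦ edgeTerm_nonneg _ _ _ _
      _ ≤ ∑ i, ∑ j, edgeTerm 0 u (ptA i) (ptA j) := by
        gcongr
        exact sum_Vn_zero_le fun y ↦ edgeTerm_nonneg _ _ _ _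
      _ ≤ _ := by
        gcongr
        exact edgeTerm_le _ _ _ _
  rw [energy_eq_sum_edgeTerm, pow_zero, one_mul]
  simp only [Fin.sum_univ_three] at hsum
  simp only [triangleEnergy, Function.comp_apply]
  linarith

lemma augmentedEnergy_le (n : ℕ) (u : Pt → ℝ) : augmentedEnergy n u ≤ 19 * cellEnergy n u := by
  induction n generalizing u with
  | zero =>
    have := energy_zero_le u
    simp only [augmentedEnergy, cornerEnergy, cellEnergy, Function.iterate_zero, Function.id_comp,
      Finset.sum_const, Finset.card_univ, Fintype.card_fin, nsmul_eq_mul, Nat.cast_ofNat, pow_zero]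
    linarith
  | succ n ih =>
    calc augmentedEnergy (n + 1) u
      _ ≤ 5 / 3 * ∑ i, augmentedEnergy n (u ∘ sgMap i) := augmentedEnergy_succ_le n u
      _ ≤ 5 / 3 * ∑ i, 19 * cellEnergy n (u ∘ sgMap i) := by
        gcongr
        exact ih _
      _ = 19 * cellEnergy (n + 1) u := by
        rw [cellEnergy, ← Finset.mul_sum]
        ring

theorem energy_le_cellEnergy (n : ℕ) (u : Pt → ℝ) : energy n u ≤ 19 * cellEnergy n u := by
  have hcorner : 0 ≤ 6 * (5 / 3) ^ n * ∑ j, cornerEnergy n j u :=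
    mul_nonneg (by positivity) (Finset.sum_nonneg fun j _ ↦ triangleEnergy_nonneg _)
  exact (le_add_of_nonneg_right hcorner).trans (augmentedEnergy_le n u)

/-! ### Approximation by piecewise harmonic functions -/

lemma sgExt_coe (g : C(sg, ℝ)) (x : sg) : sgExt g x = g x := dif_pos x.2

lemma cellEnergy_congr (n : ℕ) {u v : Pt → ℝ} (h : EqOn u v sg) :
    cellEnergy n u = cellEnergy n v := by
  induction n generalizing u v with
  | zero => exact congrArg triangleEnergy (funext fun i ↦ h (ptA_mem_sg i))
  | succ n ih =>
    rw [cellEnergy, cellEnergy]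
    congr! 2 with i
    exact ih (h.comp_right (mapsTo_sgMap_sg i))

lemma cellEnergy_zero_sgExt (g : C(sg, ℝ)) :
    cellEnergy 0 (sgExt g) = triangleEnergy (g ∘ corner) :=
  congrArg triangleEnergy (funext fun i ↦ sgExt_coe g (corner i))

lemma cellEnergy_succ_sgExt (n : ℕ) (g : C(sg, ℝ)) :
    cellEnergy (n + 1) (sgExt g) = 5 / 3 * ∑ i, cellEnergy n (sgExt (g.comp (cellMap i))) := by
  rw [cellEnergy]
  congr! 2 with i
  refine cellEnergy_congr n fun x hx ↦ ?_
  exact (sgExt_coe g (cellMap i ⟨x, hx⟩)).trans (sgExt_coe (g.comp (cellMap i)) ⟨x, hx⟩).symm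

lemma cellEnergy_sgExt_harmonic (n : ℕ) (a : Fin 3 → ℝ) :
    cellEnergy n (sgExt (harmonic a)) = triangleEnergy a := by
  induction n generalizing a with
  | zero => rw [cellEnergy_zero_sgExt, funext (harmonic_corner a) (f := harmonic a ∘ corner)]
  | succ n ih =>
    have hcomp (i : Fin 3) : (harmonic a).comp (cellMap i) = harmonic (harmonicExt i a) :=
      ContinuousMap.ext (harmonic_cellMap a i)
    simp only [cellEnergy_succ_sgExt, hcomp, ih, sum_triangleEnergy_harmonicExt]
    ring

lemma bddAbove_cellEnergy_glue {g : Fin 3 → C(sg, ℝ)}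
    (hg : ∀ i j, g i (corner j) = g j (corner i))
    (hbdd : ∀ i, BddAbove (range fun m ↦ cellEnergy m (sgExt (g i)))) :
    BddAbove (range fun m ↦ cellEnergy m (sgExt (glue g hg))) := by
  choose M hM using hbdd
  have hcomp (i : Fin 3) : (glue g hg).comp (cellMap i) = g i :=
    ContinuousMap.ext (glue_cellMap hg i)
  refine ⟨max (cellEnergy 0 (sgExt (glue g hg))) (5 / 3 * ∑ i, M i), forall_mem_range.2 fun m ↦ ?_⟩
  cases m with
  | zero => exact le_max_left _ _
  | succ m =>
    refine le_max_of_le_right ?_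
    simp only [cellEnergy_succ_sgExt, hcomp]
    gcongr with i
    exact hM i (mem_range_self m)

theorem exists_bddAbove_cellEnergy_dist_le (n : ℕ) {g : C(sg, ℝ)} {ε : ℝ}
    (hg : ∀ x y : sg, dist x y ≤ Metric.diam sg / 2 ^ n → dist (g x) (g y) ≤ ε) :
    ∃ u : C(sg, ℝ), BddAbove (range fun m ↦ cellEnergy m (sgExt u)) ∧
      (∀ i, u (corner i) = g (corner i)) ∧ ∀ x, dist (u x) (g x) ≤ ε := by
  induction n generalizing g with
  | zero =>
    refine ⟨harmonic (g ∘ corner), ?_, harmonic_corner _, fun x ↦ ?_⟩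
    · simp only [cellEnergy_sgExt_harmonic, range_const, bddAbove_singleton]
    · refine dist_harmonic_le (fun k ↦ hg _ _ ?_) x
      rw [pow_zero, div_one]
      exact Metric.dist_le_diam_of_mem isCompact_sg.isBounded (corner k).2 x.2
  | succ n ih =>
    have hcell (i : Fin 3) (x y : sg) (hxy : dist x y ≤ Metric.diam sg / 2 ^ n) :
        dist (g.comp (cellMap i) x) (g.comp (cellMap i) y) ≤ ε := by
      refine hg _ _ ?_
      rw [dist_cellMap, pow_succ, ← div_div]
      gcongr
    choose u hbdd hcorner hdist using fun i ↦ ih (hcell i)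
    have hu (i j : Fin 3) : u i (corner j) = u j (corner i) := by
      rw [hcorner, hcorner, ContinuousMap.comp_apply, ContinuousMap.comp_apply, cellMap_corner_comm]
    refine ⟨glue u hu, bddAbove_cellEnergy_glue hu hbdd, fun i ↦ ?_, fun x ↦ ?_⟩
    · rw [glue_corner, hcorner, ContinuousMap.comp_apply, cellMap_corner_self]
    · obtain ⟨i, y, rfl⟩ := exists_cellMap_eq x
      rw [glue_cellMap]
      exact hdist i y

theorem dense_bddAbove_cellEnergy :
    Dense {g : C(sg, ℝ) | BddAbove (range fun n ↦ cellEnergy n (sgExt g))} := by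
  refine Metric.dense_iff.2 fun g ε hε ↦ ?_
  obtain ⟨δ, hδ, hgδ⟩ := Metric.uniformContinuous_iff.1
    (CompactSpace.uniformContinuous_of_continuous g.continuous) (ε / 2) (half_pos hε)
  obtain ⟨n, hn⟩ : ∃ n : ℕ, Metric.diam sg / 2 ^ n < δ :=
    ((tendsto_const_nhds.div_atTop
      (tendsto_pow_atTop_atTop_of_one_lt one_lt_two)).eventually_lt_const hδ).exists
  obtain ⟨u, hbdd, -, hu⟩ := exists_bddAbove_cellEnergy_dist_le n
    fun x y hxy ↦ (hgδ (hxy.trans_lt hn)).le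
  exact ⟨u, ((ContinuousMap.dist_le (half_pos hε).le).2 hu).trans_lt (half_lt_self hε), hbdd⟩

lemma bddAbove_energy_of_bddAbove_cellEnergy {u : Pt → ℝ}
    (hu : BddAbove (range fun n ↦ cellEnergy n u)) : BddAbove (range fun n ↦ energy n u) := by
  obtain ⟨M, hM⟩ := hu
  refine ⟨19 * M, forall_mem_range.2 fun n ↦ (energy_le_cellEnergy n u).trans ?_⟩
  gcongr
  exact hM (mem_range_self n)

end SierpinskiGasket

/-- The set of continuous functions on `V` whose restriction to `V*` has finite
energy is dense in `C(V)`. -/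
theorem statement11 :
    Dense {g : C(sg, ℝ) | BddAbove (Set.range fun n : ℕ => energy n (sgExt g))} := by
  exact SierpinskiGasket.dense_bddAbove_cellEnergy.mono fun _ hg ↦
    SierpinskiGasket.bddAbove_energy_of_bddAbove_cellEnergy hg

end
end
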